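/- Let ε ∈ [−1/2, 1/2] with ε ≠ 0. Then there exists C_ε > 0, depending only on A₂, K₂ and ε, such that for every integer N ≥ 2 (h = 1/N), every vector (ψ₀,…,ψ_{N−1}) ∈ ℂ^N with associated step function ψ_h = Σ_{i=0}^{N−1} ψ_i χ_{i+ε}, and every 1-periodic u ∈ C¹(ℝ, ℂ), one has | h² Σ_{i,j=0}^{N−1} ψ_i V₂(t_{i+ε}, t_j) u(t_j) | ≤ C_ε ‖ψ_h‖₀ ( ‖u‖₀ + h ‖u‖₁ ). -/

import Mathlib

/-!
Cauchy–Schwarz over the index pairs bounds the bilinear form by the Hilbert–Schmidt norm of the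
sampled kernel times the discrete `ℓ²` norms of `ψ` and of the samples of `u`.

*The kernel.* For each `j` the points `t_{i+ε} - t_j` run, modulo `1`, through `(k + θ) / N` with
`0 ≤ k < N` and `θ ∈ (0, 1)` the fractional part of `ε`. There `log² (sin² πx)` is at most a
multiple of `x^{-1/2} + (1 - x)^{-1/2}`, and `k + θ ≥ θ (k + 1)` reduces the column sums to
`Σ_{k ≤ N} k^{-1/2} ≤ 2 √N`. So the squared Hilbert–Schmidt norm is `O(N²)`, uniformly in `N`.

*The samples.* On a cell of length `h`, `‖u‖²` varies by at most
`∫ 2 ‖u‖ ‖u'‖ ≤ h⁻¹ ∫ ‖u‖² + h ∫ ‖u'‖²`, and by Parseval `‖u'‖₀ ≤ 2π ‖u‖₁`.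
-/

noncomputable section

/-- Smooth kernel data, 1-periodic in each variable. -/
def SPK (A : ℝ → ℝ → ℂ) : Prop :=
  ContDiff ℝ (⊤ : ℕ∞) (fun p : ℝ × ℝ => A p.1 p.2) ∧
    (∀ s t, A (s + 1) t = A s t) ∧ (∀ s t, A s (t + 1) = A s t)

/-- Logarithmic kernel `V(s,t) = (i/(2π)) A(s,t) log(sin²(π(s−t))) + K(s,t)`. -/
def logKer (A K : ℝ → ℝ → ℂ) (s t : ℝ) : ℂ :=
  Complex.I / (2 * Real.pi) * A s t * (Real.log (Real.sin (Real.pi * (s - t)) ^ 2) : ℂ) + K s t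

/-- Grid point `s_{j+ε} = (j − 1/2 + ε)h`. -/
def sg (h ε : ℝ) (j : ℤ) : ℝ := ((j : ℝ) - 1 / 2 + ε) * h

/-- Grid point `t_{j+ε} = (j + ε)h`. -/
def tg (h ε : ℝ) (j : ℤ) : ℝ := ((j : ℝ) + ε) * h

/-- Integral operator with kernel `V`. -/
def Vop (V : ℝ → ℝ → ℂ) (φ : ℝ → ℂ) (s : ℝ) : ℂ := ∫ t in (0:ℝ)..1, V s t * φ t

/-- Hypersingular operator `W = −D V₁ D + V₂`. -/
def Wop (V1 V2 : ℝ → ℝ → ℂ) (φ : ℝ → ℂ) (s : ℝ) : ℂ :=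
  -deriv (Vop V1 (deriv φ)) s + Vop V2 φ s

/-- Nyström matrix entries `W^ε_{ij}`. -/
def Wmat (V1 V2 : ℝ → ℝ → ℂ) (h ε : ℝ) (i j : ℤ) : ℂ :=
  V1 (sg h ε (i + 1)) (sg h 0 (j + 1)) - V1 (sg h ε i) (sg h 0 (j + 1))
    - V1 (sg h ε (i + 1)) (sg h 0 j) + V1 (sg h ε i) (sg h 0 j)
    + (h : ℂ) ^ 2 * V2 (tg h ε i) (tg h 0 j)

/-- Fourier coefficient of a 1-periodic function. -/
def fc (u : ℝ → ℂ) (m : ℤ) : ℂ :=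
  ∫ t in (0:ℝ)..1, u t * Complex.exp (-(2 * Real.pi * Complex.I * (m : ℂ) * (t : ℂ)))

/-- Periodic Sobolev norm of order `r`. -/
def sobNorm (r : ℝ) (u : ℝ → ℂ) : ℝ :=
  Real.sqrt (‖fc u 0‖ ^ 2 +
    ∑' m : ℤ, if m = 0 then 0 else |(m : ℝ)| ^ (2 * r) * ‖fc u m‖ ^ 2)

/-- 1-periodic step function on the ε-shifted grid with coefficients `v`. -/
def stepf (N : ℕ) (ε : ℝ) (v : ZMod N → ℂ) (s : ℝ) : ℂ :=
  v ((⌊s * N + 1 / 2 - ε⌋ : ℤ) : ZMod N)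

/-- Midpoint quadrature error matrix entries `E^ε_{ij}`. -/
def Emat (V2 : ℝ → ℝ → ℂ) (h ε : ℝ) (i j : ℤ) : ℂ :=
  (∫ s in (sg h ε i)..(sg h ε (i + 1)), ∫ t in (sg h 0 j)..(sg h 0 (j + 1)), V2 s t)
    - (h : ℂ) ^ 2 * V2 (tg h ε i) (tg h 0 j)

/-- Spectral (ℓ²-operator) norm of a complex `N×N` matrix. -/
def specNorm {N : ℕ} (M : Matrix (Fin N) (Fin N) ℂ) : ℝ :=
  ‖LinearMap.toContinuousLinearMap (Matrix.toEuclideanLin M)‖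

/-- The function `C̄₁(t) = −(1/(2πi)) log(4 sin²(πt))`. -/
def Cbar1 (t : ℝ) : ℂ :=
  -(1 / (2 * Real.pi * Complex.I)) * (Real.log (4 * Real.sin (Real.pi * t) ^ 2) : ℂ)

end

open MeasureTheory Set

/-! ### Boundedness of the smooth factors -/

lemma exists_norm_le_of_continuous_of_periodic {E : Type*} [SeminormedAddGroup E]
    {f : ℝ → ℝ → E} {c d : ℝ} (hf : Continuous (Function.uncurry f)) (hc : 0 < c) (hd : 0 < d)
    (hfst : ∀ t, Function.Periodic (f · t) c) (hsnd : ∀ s, Function.Periodic (f s) d) :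
    ∃ C, ∀ s t, ‖f s t‖ ≤ C := by
  obtain ⟨C, hC⟩ := ((isCompact_Icc (a := 0) (b := c)).prod
    (isCompact_Icc (a := 0) (b := d))).exists_bound_of_continuousOn hf.continuousOn
  refine ⟨C, fun s t => ?_⟩
  obtain ⟨s', hs', hs⟩ := (hfst t).exists_mem_Ico₀ hc s
  obtain ⟨t', ht', ht⟩ := (hsnd s').exists_mem_Ico₀ hd t
  rw [hs, ht]
  exact hC (s', t') ⟨Ico_subset_Icc_self hs', Ico_subset_Icc_self ht'⟩

lemma SPK.exists_norm_le {A : ℝ → ℝ → ℂ} (hA : SPK A) : ∃ C, ∀ s t, ‖A s t‖ ≤ C :=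
  exists_norm_le_of_continuous_of_periodic hA.1.continuous one_pos one_pos
    (fun t s => hA.2.1 s t) hA.2.2

/-! ### Riemann sums of the squared logarithm -/

lemma sq_log_le_div_sqrt {y : ℝ} (hy₀ : 0 < y) (hy₁ : y ≤ 1) : Real.log y ^ 2 ≤ 16 / √y := by
  have hlog : |Real.log y * y ^ (1 / 4 : ℝ)| ≤ 4 :=
    (Real.abs_log_mul_self_rpow_lt y (1 / 4) hy₀ hy₁ (by norm_num)).le.trans_eq (by norm_num)
  have hsqrt : (y ^ (1 / 4 : ℝ)) ^ 2 = √y := by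
    rw [Real.sqrt_eq_rpow, ← Real.rpow_mul_natCast hy₀.le]
    norm_num
  rw [le_div_iff₀ (Real.sqrt_pos.2 hy₀), ← hsqrt, ← mul_pow]
  exact (sq_le_sq' (abs_le.1 hlog).1 (abs_le.1 hlog).2).trans_eq (by norm_num)

lemma min_le_sin_pi_mul {x : ℝ} (hx₀ : 0 ≤ x) (hx₁ : x ≤ 1) :
    min x (1 - x) ≤ Real.sin (Real.pi * x) := by
  have half : ∀ z, 0 ≤ z → z ≤ 1 / 2 → z ≤ Real.sin (Real.pi * z) := fun z hz₀ hz₁ =>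
    calc z ≤ 2 / Real.pi * (Real.pi * z) := by
          rw [← mul_assoc, div_mul_cancel₀ _ Real.pi_ne_zero]
          linarith
      _ ≤ _ := Real.mul_le_sin (by positivity) (by nlinarith [Real.pi_pos])
  rcases le_total x (1 / 2) with hx | hx
  · exact (min_le_left _ _).trans (half x hx₀ hx)
  · rw [← Real.sin_pi_sub, ← mul_one_sub]
    exact (min_le_right _ _).trans (half (1 - x) (by linarith) (by linarith))

lemma sq_log_sq_sin_le {x : ℝ} (hx₀ : 0 < x) (hx₁ : x < 1) :
    Real.log (Real.sin (Real.pi * x) ^ 2) ^ 2 ≤ 64 * (1 / √x + 1 / √(1 - x)) := by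
  have hmin : 0 < min x (1 - x) := lt_min hx₀ (by linarith)
  have hsin := min_le_sin_pi_mul hx₀.le hx₁.le
  have hinv : 1 / √(min x (1 - x)) ≤ 1 / √x + 1 / √(1 - x) := by
    rcases min_choice x (1 - x) with h | h <;> rw [h]
    · exact le_add_of_nonneg_right (by positivity)
    · exact le_add_of_nonneg_left (by positivity)
  calc Real.log (Real.sin (Real.pi * x) ^ 2) ^ 2
      = 4 * Real.log (Real.sin (Real.pi * x)) ^ 2 := by rw [Real.log_pow]; push_cast; ring
    _ ≤ 4 * (16 / √(Real.sin (Real.pi * x))) := by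
        gcongr
        exact sq_log_le_div_sqrt (hmin.trans_le hsin) (Real.sin_le_one _)
    _ ≤ 4 * (16 / √(min x (1 - x))) := by gcongr
    _ = 64 * (1 / √(min x (1 - x))) := by ring
    _ ≤ 64 * (1 / √x + 1 / √(1 - x)) := by gcongr

lemma sum_range_one_div_sqrt_le (n : ℕ) :
    ∑ k ∈ Finset.range n, 1 / √((k : ℝ) + 1) ≤ 2 * √n := by
  induction n with
  | zero => simp
  | succ n ih =>
    have hstep : 1 / √((n : ℝ) + 1) ≤ 2 * √((n : ℝ) + 1) - 2 * √n := by
      rw [div_le_iff₀ (by positivity)]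
      nlinarith [sq_nonneg (√((n : ℝ) + 1) - √n), Real.sq_sqrt (n.cast_nonneg (α := ℝ)),
        Real.sq_sqrt (n.cast_add_one_pos (α := ℝ)).le]
    rw [Finset.sum_range_succ]
    push_cast
    linarith

lemma sum_range_one_div_sqrt_add_div_le (N : ℕ) {θ : ℝ} (hθ₀ : 0 < θ) (hθ₁ : θ ≤ 1) :
    ∑ k ∈ Finset.range N, 1 / √((k + θ) / N) ≤ 2 / √θ * N := by
  rcases N.eq_zero_or_pos with rfl | hN
  · simp
  have hterm (k : ℕ) : 1 / √((k + θ) / N) ≤ √N / √θ * (1 / √((k : ℝ) + 1)) :=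
    calc 1 / √((k + θ) / N) ≤ 1 / √(θ * (k + 1) / N) := by
          gcongr
          nlinarith [k.cast_nonneg (α := ℝ)]
      _ = √N / √θ * (1 / √((k : ℝ) + 1)) := by
          rw [Real.sqrt_div' _ N.cast_nonneg, Real.sqrt_mul hθ₀.le]
          field_simp
  calc ∑ k ∈ Finset.range N, 1 / √((k + θ) / N)
      ≤ √N / √θ * ∑ k ∈ Finset.range N, 1 / √((k : ℝ) + 1) := by
        rw [Finset.mul_sum]
        exact Finset.sum_le_sum fun k _ => hterm k
    _ ≤ √N / √θ * (2 * √N) := by gcongr; exact sum_range_one_div_sqrt_le N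
    _ = 2 / √θ * (√N * √N) := by ring
    _ = 2 / √θ * N := by rw [Real.mul_self_sqrt N.cast_nonneg]

lemma sum_range_sq_log_sq_sin_le (N : ℕ) {θ : ℝ} (hθ₀ : 0 < θ) (hθ₁ : θ < 1) :
    ∑ k ∈ Finset.range N, Real.log (Real.sin (Real.pi * ((k + θ) / N)) ^ 2) ^ 2 ≤
      128 * (1 / √θ + 1 / √(1 - θ)) * N := by
  have hterm : ∀ k ∈ Finset.range N, Real.log (Real.sin (Real.pi * ((k + θ) / N)) ^ 2) ^ 2 ≤
      64 * (1 / √((k + θ) / N) + 1 / √(((N - 1 - k : ℕ) + (1 - θ)) / N)) := by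
    intro k hk
    have hkN : k + 1 ≤ N := Finset.mem_range.1 hk
    have hkN' : (k : ℝ) + 1 ≤ N := mod_cast hkN
    have hN : (0 : ℝ) < N := by linarith [k.cast_nonneg (α := ℝ)]
    have hreflect : ((N - 1 - k : ℕ) + (1 - θ)) / N = 1 - (k + θ) / N := by
      rw [Nat.sub_sub, add_comm 1 k, Nat.cast_sub hkN]
      push_cast
      field_simp
      ring
    rw [hreflect]
    exact sq_log_sq_sin_le (by positivity) ((div_lt_one hN).2 (by linarith))
  calc _ ≤ ∑ k ∈ Finset.range N,
        64 * (1 / √((k + θ) / N) + 1 / √(((N - 1 - k : ℕ) + (1 - θ)) / N)) :=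
        Finset.sum_le_sum hterm
    _ = 64 * (∑ k ∈ Finset.range N, 1 / √((k + θ) / N) +
          ∑ k ∈ Finset.range N, 1 / √((k + (1 - θ)) / N)) := by
        rw [← Finset.mul_sum, Finset.sum_add_distrib,
          Finset.sum_range_reflect (fun k : ℕ => 1 / √((k + (1 - θ)) / N))]
    _ ≤ 64 * (2 / √θ * N + 2 / √(1 - θ) * N) := by
        gcongr
        · exact sum_range_one_div_sqrt_add_div_le N hθ₀ hθ₁.le
        · exact sum_range_one_div_sqrt_add_div_le N (by linarith) (by linarith)
    _ = 128 * (1 / √θ + 1 / √(1 - θ)) * N := by ring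

lemma fract_ne_zero_of_abs_lt_one {R : Type*} [Ring R] [LinearOrder R] [IsStrictOrderedRing R]
    [FloorRing R] {x : R} (hx : |x| < 1) (hx₀ : x ≠ 0) : Int.fract x ≠ 0 := by
  intro hfract
  obtain ⟨n, rfl⟩ := Int.fract_eq_zero_iff.1 hfract
  have hn : n = 0 := Int.abs_lt_one_iff.1 (mod_cast hx)
  exact hx₀ (by rw [hn, Int.cast_zero])

lemma periodic_sum_range_add_div {M : Type*} [AddCancelCommMonoid M] {f : ℝ → M}
    (hf : Function.Periodic f 1) (N : ℕ) :
    Function.Periodic (fun x => ∑ k ∈ Finset.range N, f ((k + x) / N)) 1 := by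
  intro x
  rcases N.eq_zero_or_pos with rfl | hN
  · simp
  have hwrap : f ((N + x) / N) = f (((0 : ℕ) + x) / N) := by
    rw [add_div, div_self (by positivity), add_comm, hf, Nat.cast_zero, zero_add]
  have hsucc (k : ℕ) : f ((k + (x + 1)) / N) = f (((k + 1 : ℕ) + x) / N) := by
    rw [Nat.cast_succ, add_assoc, add_comm x]
  refine add_right_cancel (b := f (((0 : ℕ) + x) / N)) ?_
  beta_reduce
  rw [Finset.sum_congr rfl fun k _ => hsucc k,
    ← Finset.sum_range_succ' (fun k : ℕ => f ((k + x) / N)), Finset.sum_range_succ, hwrap]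

/-! ### The sampled kernel -/

/-- The grid point `t_{i+ε}` on the grid of step `1 / N`. The index is a residue class modulo `N`,
evaluated at its representative in `{0, …, N - 1}`. -/
noncomputable def gridPoint (N : ℕ) (ε : ℝ) (i : ZMod N) : ℝ := tg (1 / (N : ℝ)) ε i.val

/-- The discrete `ℓ²` norm `(h Σ_i ‖v_i‖²)^{1/2}`, with `h = 1 / N`: the `L²` norm of the step
function with values `v_i` on the cells of the grid. -/
noncomputable def gridNorm {E : Type*} [Norm E] {N : ℕ} [NeZero N] (v : ZMod N → E) : ℝ :=
  √(1 / (N : ℝ) * ∑ i, ‖v i‖ ^ 2)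

lemma gridNorm_nonneg {E : Type*} [Norm E] {N : ℕ} [NeZero N] (v : ZMod N → E) :
    0 ≤ gridNorm v :=
  Real.sqrt_nonneg _

lemma gridPoint_eq (N : ℕ) (ε : ℝ) (i : ZMod N) : gridPoint N ε i = (i.val + ε) / N := by
  simp [gridPoint, tg, div_eq_mul_inv]

lemma sum_zmod_val {M : Type*} [AddCommMonoid M] (N : ℕ) [NeZero N] (f : ℕ → M) :
    ∑ i : ZMod N, f i.val = ∑ k ∈ Finset.range N, f k := by
  obtain _ | n := N
  · exact absurd rfl (NeZero.ne 0)
  · exact Fin.sum_univ_eq_sum_range f (n + 1)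

lemma sum_sq_log_sq_sin_gridPoint_sub_le {N : ℕ} [NeZero N] {ε : ℝ} (hε : Int.fract ε ≠ 0)
    (j : ZMod N) :
    ∑ i, Real.log (Real.sin (Real.pi * (gridPoint N ε i - gridPoint N 0 j)) ^ 2) ^ 2 ≤
      128 * (1 / √(Int.fract ε) + 1 / √(1 - Int.fract ε)) * N := by
  set f : ℝ → ℝ := fun x => Real.log (Real.sin (Real.pi * x) ^ 2) ^ 2 with hf
  have hperiodic : Function.Periodic f 1 := fun x => by
    simp only [hf, mul_add, mul_one, Real.sin_add_pi, neg_sq]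
  have hfract := (periodic_sum_range_add_div hperiodic N).sub_int_mul_eq (x := ε - j.val)
    ⌊ε - j.val⌋
  rw [mul_one, Int.self_sub_floor, Int.fract_sub_natCast] at hfract
  calc ∑ i, f (gridPoint N ε i - gridPoint N 0 j)
      = ∑ i : ZMod N, f ((i.val + (ε - j.val)) / N) := by
        refine Finset.sum_congr rfl fun i _ => congrArg f ?_
        rw [gridPoint_eq, gridPoint_eq]
        ring
    _ = ∑ k ∈ Finset.range N, f ((k + Int.fract ε) / N) := by
        rw [sum_zmod_val N (fun k => f ((k + (ε - j.val)) / N)), hfract]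
    _ ≤ _ := sum_range_sq_log_sq_sin_le N ((Int.fract_nonneg ε).lt_of_ne' hε) (Int.fract_lt_one ε)

lemma sq_norm_logKer_le {A K : ℝ → ℝ → ℂ} {a b s t : ℝ} (hA : ‖A s t‖ ≤ a) (hK : ‖K s t‖ ≤ b) :
    ‖logKer A K s t‖ ^ 2 ≤
      2 * a ^ 2 * Real.log (Real.sin (Real.pi * (s - t)) ^ 2) ^ 2 + 2 * b ^ 2 := by
  set L := Real.log (Real.sin (Real.pi * (s - t)) ^ 2)
  have hI : ‖Complex.I / (2 * (Real.pi : ℂ))‖ ≤ 1 := by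
    rw [norm_div, Complex.norm_I, norm_mul, Complex.norm_ofNat, Complex.norm_real,
      Real.norm_of_nonneg Real.pi_pos.le, div_le_one (by positivity)]
    linarith [Real.pi_gt_three]
  have hnorm : ‖logKer A K s t‖ ≤ a * |L| + b :=
    calc ‖logKer A K s t‖
        ≤ ‖Complex.I / (2 * (Real.pi : ℂ))‖ * ‖A s t‖ * |L| + ‖K s t‖ := by
          rw [← Real.norm_eq_abs, ← Complex.norm_real, ← norm_mul, ← norm_mul]
          exact norm_add_le _ _
      _ ≤ 1 * a * |L| + b := by gcongr
      _ = a * |L| + b := by rw [one_mul]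
  calc ‖logKer A K s t‖ ^ 2 ≤ (a * |L| + b) ^ 2 := by gcongr
    _ ≤ 2 * ((a * |L|) ^ 2 + b ^ 2) := add_sq_le
    _ = 2 * a ^ 2 * L ^ 2 + 2 * b ^ 2 := by rw [mul_pow, sq_abs]; ring

lemma sum_sum_sq_norm_logKer_le {A K : ℝ → ℝ → ℂ} {a b ε : ℝ} (hA : ∀ s t, ‖A s t‖ ≤ a)
    (hK : ∀ s t, ‖K s t‖ ≤ b) (hε : Int.fract ε ≠ 0) (N : ℕ) [NeZero N] :
    ∑ i, ∑ j, ‖logKer A K (gridPoint N ε i) (gridPoint N 0 j)‖ ^ 2 ≤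
      (2 * a ^ 2 * (128 * (1 / √(Int.fract ε) + 1 / √(1 - Int.fract ε))) + 2 * b ^ 2) *
        (N : ℝ) ^ 2 := by
  set c := 128 * (1 / √(Int.fract ε) + 1 / √(1 - Int.fract ε))
  have hcolumn (j : ZMod N) : ∑ i, ‖logKer A K (gridPoint N ε i) (gridPoint N 0 j)‖ ^ 2 ≤
      (2 * a ^ 2 * c + 2 * b ^ 2) * N :=
    calc _ ≤ ∑ i, (2 * a ^ 2 *
          Real.log (Real.sin (Real.pi * (gridPoint N ε i - gridPoint N 0 j)) ^ 2) ^ 2 +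
            2 * b ^ 2) := Finset.sum_le_sum fun i _ => sq_norm_logKer_le (hA _ _) (hK _ _)
      _ ≤ 2 * a ^ 2 * (c * N) + N * (2 * b ^ 2) := by
          rw [Finset.sum_add_distrib, ← Finset.mul_sum, Finset.sum_const, Finset.card_univ,
            ZMod.card, nsmul_eq_mul]
          gcongr
          exact sum_sq_log_sq_sin_gridPoint_sub_le hε j
      _ = (2 * a ^ 2 * c + 2 * b ^ 2) * N := by ring
  rw [Finset.sum_comm]
  calc _ ≤ ∑ _j : ZMod N, (2 * a ^ 2 * c + 2 * b ^ 2) * N :=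
        Finset.sum_le_sum fun j _ => hcolumn j
    _ = (2 * a ^ 2 * c + 2 * b ^ 2) * (N : ℝ) ^ 2 := by
        rw [Finset.sum_const, Finset.card_univ, ZMod.card, nsmul_eq_mul]
        ring

/-! ### Bilinear forms and the Hilbert–Schmidt norm -/

lemma norm_sum_sum_mul_mul_le {ι κ R : Type*} [Fintype ι] [Fintype κ] [NonUnitalSeminormedRing R]
    (M : ι → κ → R) (v : ι → R) (w : κ → R) :
    ‖∑ i, ∑ j, v i * M i j * w j‖ ≤
      √(∑ i, ∑ j, ‖M i j‖ ^ 2) * (√(∑ i, ‖v i‖ ^ 2) * √(∑ j, ‖w j‖ ^ 2)) :=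
  calc ‖∑ i, ∑ j, v i * M i j * w j‖ ≤ ∑ i, ∑ j, ‖M i j‖ * (‖v i‖ * ‖w j‖) :=
        norm_sum_le_of_le _ fun i _ => norm_sum_le_of_le _ fun j _ =>
          norm_mul₃_le.trans_eq (by ring)
    _ ≤ √(∑ i, ∑ j, ‖M i j‖ ^ 2) * √(∑ i, ∑ j, (‖v i‖ * ‖w j‖) ^ 2) := by
        simpa only [Fintype.sum_prod_type] using Real.sum_mul_le_sqrt_mul_sqrt Finset.univ
          (fun p : ι × κ => ‖M p.1 p.2‖) (fun p => ‖v p.1‖ * ‖w p.2‖)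
    _ = √(∑ i, ∑ j, ‖M i j‖ ^ 2) * (√(∑ i, ‖v i‖ ^ 2) * √(∑ j, ‖w j‖ ^ 2)) := by
        simp only [mul_pow]
        rw [← Finset.sum_mul_sum, Real.sqrt_mul (by positivity)]

lemma sqrt_sum_sq_norm_eq_gridNorm {E : Type*} [SeminormedAddGroup E] {N : ℕ} [NeZero N]
    (v : ZMod N → E) : √(∑ i, ‖v i‖ ^ 2) = √N * gridNorm v := by
  have hN : (N : ℝ) ≠ 0 := NeZero.ne _
  rw [gridNorm, ← Real.sqrt_mul N.cast_nonneg, ← mul_assoc, mul_one_div_cancel hN, one_mul]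

lemma norm_sq_mul_sum_sum_le_gridNorm {N : ℕ} [NeZero N] {M : ZMod N → ZMod N → ℂ} {B : ℝ}
    (hM : ∑ i, ∑ j, ‖M i j‖ ^ 2 ≤ B * (N : ℝ) ^ 2) (v w : ZMod N → ℂ) :
    ‖(1 / (N : ℂ)) ^ 2 * ∑ i, ∑ j, v i * M i j * w j‖ ≤ √B * gridNorm v * gridNorm w := by
  have hN : (0 : ℝ) < N := Nat.cast_pos.2 (NeZero.pos N)
  have hsqrt : √(∑ i, ∑ j, ‖M i j‖ ^ 2) ≤ √B * N := by
    rw [← Real.sqrt_sq hN.le, ← Real.sqrt_mul' _ (sq_nonneg _)]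
    exact Real.sqrt_le_sqrt hM
  have hprod : √(∑ i, ‖v i‖ ^ 2) * √(∑ j, ‖w j‖ ^ 2) = N * (gridNorm v * gridNorm w) := by
    rw [sqrt_sum_sq_norm_eq_gridNorm, sqrt_sum_sq_norm_eq_gridNorm, mul_mul_mul_comm,
      Real.mul_self_sqrt hN.le]
  calc ‖(1 / (N : ℂ)) ^ 2 * ∑ i, ∑ j, v i * M i j * w j‖
      = (1 / (N : ℝ)) ^ 2 * ‖∑ i, ∑ j, v i * M i j * w j‖ := by
        rw [norm_mul, norm_pow, norm_div, norm_one, Complex.norm_natCast]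
    _ ≤ (1 / (N : ℝ)) ^ 2 * (√B * N * (N * (gridNorm v * gridNorm w))) := by
        gcongr
        rw [← hprod]
        exact (norm_sum_sum_mul_mul_le M v w).trans (by gcongr)
    _ = √B * gridNorm v * gridNorm w := by field_simp

/-! ### Sampling a differentiable function -/

section Sampling

variable {E : Type*} [NormedAddCommGroup E] [InnerProductSpace ℝ E] {u : ℝ → E}

lemma sq_norm_le_sq_norm_add_integral (hu : ContDiff ℝ 1 u) {a b x t : ℝ} (hx : x ∈ Icc a b)
    (ht : t ∈ Icc a b) :
    ‖u x‖ ^ 2 ≤ ‖u t‖ ^ 2 + ∫ y in a..b, 2 * (‖u y‖ * ‖deriv u y‖) := by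
  have := hu.continuous_deriv le_rfl
  have hcont : Continuous fun y => 2 * (‖u y‖ * ‖deriv u y‖) := by fun_prop
  have hnonneg (y : ℝ) : 0 ≤ 2 * (‖u y‖ * ‖deriv u y‖) := by positivity
  have hsubset : uIoc t x ⊆ uIoc a b := by
    rw [uIoc_of_le (ht.1.trans ht.2)]
    exact Ioc_subset_Ioc (le_min ht.1 hx.1) (max_le ht.2 hx.2)
  have hftc : ∫ y in t..x, 2 * inner ℝ (u y) (deriv u y) = ‖u x‖ ^ 2 - ‖u t‖ ^ 2 :=
    intervalIntegral.integral_eq_sub_of_hasDerivAt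
      (fun y _ => (hu.differentiable one_ne_zero y).hasDerivAt.norm_sq)
      (Continuous.intervalIntegrable (by fun_prop) _ _)
  have hbound : ‖u x‖ ^ 2 - ‖u t‖ ^ 2 ≤ ∫ y in a..b, 2 * (‖u y‖ * ‖deriv u y‖) :=
    calc ‖u x‖ ^ 2 - ‖u t‖ ^ 2 ≤ ‖∫ y in t..x, 2 * inner ℝ (u y) (deriv u y)‖ :=
          hftc ▸ le_abs_self _
      _ ≤ |∫ y in t..x, 2 * (‖u y‖ * ‖deriv u y‖)| := by
          refine intervalIntegral.norm_integral_le_abs_of_norm_le (.of_forall fun y => ?_)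
            (hcont.intervalIntegrable _ _)
          rw [norm_mul, Real.norm_ofNat]
          gcongr
          exact norm_inner_le_norm _ _
      _ ≤ |∫ y in a..b, 2 * (‖u y‖ * ‖deriv u y‖)| :=
          intervalIntegral.abs_integral_mono_interval hsubset (.of_forall hnonneg)
            (hcont.intervalIntegrable _ _)
      _ = ∫ y in a..b, 2 * (‖u y‖ * ‖deriv u y‖) :=
          abs_of_nonneg (intervalIntegral.integral_nonneg (ht.1.trans ht.2) fun y _ => hnonneg y)
  linarith

lemma mul_sq_norm_le_integral (hu : ContDiff ℝ 1 u) {a b x : ℝ} (hx : x ∈ Icc a b) :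
    (b - a) * ‖u x‖ ^ 2 ≤
      ∫ t in a..b, (2 * ‖u t‖ ^ 2 + (b - a) ^ 2 * ‖deriv u t‖ ^ 2) := by
  have := hu.continuous_deriv le_rfl
  have hab : a ≤ b := hx.1.trans hx.2
  have hint {f : ℝ → ℝ} (hf : Continuous f) : IntervalIntegrable f volume a b :=
    hf.intervalIntegrable a b
  set I := ∫ y in a..b, 2 * (‖u y‖ * ‖deriv u y‖)
  calc (b - a) * ‖u x‖ ^ 2 = ∫ _t in a..b, ‖u x‖ ^ 2 := by
        rw [intervalIntegral.integral_const, smul_eq_mul]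
    _ ≤ ∫ t in a..b, (‖u t‖ ^ 2 + I) :=
        intervalIntegral.integral_mono_on hab (hint continuous_const) (hint (by fun_prop))
          fun t ht => sq_norm_le_sq_norm_add_integral hu hx ht
    _ = ∫ t in a..b, (‖u t‖ ^ 2 + (b - a) * (2 * (‖u t‖ * ‖deriv u t‖))) := by
        rw [intervalIntegral.integral_add (hint (by fun_prop)) (hint continuous_const),
          intervalIntegral.integral_add (hint (by fun_prop)) (hint (by fun_prop)),
          intervalIntegral.integral_const, intervalIntegral.integral_const_mul, smul_eq_mul]
    _ ≤ ∫ t in a..b, (2 * ‖u t‖ ^ 2 + (b - a) ^ 2 * ‖deriv u t‖ ^ 2) :=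
        intervalIntegral.integral_mono_on hab (hint (by fun_prop)) (hint (by fun_prop))
          fun t _ => by nlinarith [sq_nonneg (‖u t‖ - (b - a) * ‖deriv u t‖)]

lemma sq_gridNorm_sample_le (hu : ContDiff ℝ 1 u) (N : ℕ) [NeZero N] :
    gridNorm (fun j => u (gridPoint N 0 j)) ^ 2 ≤
      2 * (∫ t in (0 : ℝ)..1, ‖u t‖ ^ 2) +
        (1 / (N : ℝ)) ^ 2 * ∫ t in (0 : ℝ)..1, ‖deriv u t‖ ^ 2 := by
  have hN : (0 : ℝ) < N := Nat.cast_pos.2 (NeZero.pos N)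
  have := hu.continuous_deriv le_rfl
  set g : ℝ → ℝ := fun t => 2 * ‖u t‖ ^ 2 + (1 / (N : ℝ)) ^ 2 * ‖deriv u t‖ ^ 2
  have hcell (k : ℕ) :
      1 / (N : ℝ) * ‖u (k / N)‖ ^ 2 ≤ ∫ t in (k / N : ℝ)..((k + 1 : ℕ) / N : ℝ), g t := by
    have hlength : ((k + 1 : ℕ) / N : ℝ) - k / N = 1 / N := by push_cast; ring
    have hmem : (k / N : ℝ) ∈ Icc (k / N : ℝ) ((k + 1 : ℕ) / N : ℝ) :=
      left_mem_Icc.2 (by gcongr; exact k.le_succ)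
    simpa only [hlength] using mul_sq_norm_le_integral hu hmem
  calc gridNorm (fun j => u (gridPoint N 0 j)) ^ 2
      = ∑ k ∈ Finset.range N, 1 / (N : ℝ) * ‖u (k / N)‖ ^ 2 := by
        rw [gridNorm, Real.sq_sqrt (by positivity), ← Finset.mul_sum,
          ← sum_zmod_val N (fun k => ‖u (k / N)‖ ^ 2)]
        simp only [gridPoint_eq, add_zero]
    _ ≤ ∑ k ∈ Finset.range N, ∫ t in (k / N : ℝ)..((k + 1 : ℕ) / N : ℝ), g t :=
        Finset.sum_le_sum fun k _ => hcell k
    _ = ∫ t in (0 : ℝ)..1, g t := by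
        rw [intervalIntegral.sum_integral_adjacent_intervals (a := fun k : ℕ => (k / N : ℝ))
          fun k _ => Continuous.intervalIntegrable (by fun_prop) _ _,
          Nat.cast_zero, zero_div, div_self hN.ne']
    _ = _ := by
        rw [intervalIntegral.integral_add (Continuous.intervalIntegrable (by fun_prop) _ _)
          (Continuous.intervalIntegrable (by fun_prop) _ _), intervalIntegral.integral_const_mul,
          intervalIntegral.integral_const_mul]

end Sampling

/-! ### Fourier coefficients and Sobolev norms -/

lemma memLp_two_restrict_Ioc_of_continuous {E : Type*} [NormedAddCommGroup E] {u : ℝ → E}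
    (hu : Continuous u) (a b : ℝ) : MemLp u 2 (volume.restrict (Ioc a b)) :=
  (memLp_two_iff_integrable_sq_norm hu.aestronglyMeasurable).2
    (hu.norm.pow 2).integrableOn_Ioc

lemma fc_eq_fourierCoeffOn (u : ℝ → ℂ) (m : ℤ) :
    fc u m = fourierCoeffOn (zero_lt_one' ℝ) u m := by
  rw [fourierCoeffOn_eq_integral, fc, sub_zero, div_one, one_smul]
  refine intervalIntegral.integral_congr fun x _ => ?_
  rw [smul_eq_mul, mul_comm, fourier_coe_apply]
  congr 2
  push_cast
  ring

lemma hasSum_sq_norm_fc {u : ℝ → ℂ} (hu : MemLp u 2 (volume.restrict (Ioc 0 1))) :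
    HasSum (fun m => ‖fc u m‖ ^ 2) (∫ t in (0 : ℝ)..1, ‖u t‖ ^ 2) := by
  simpa [fc_eq_fourierCoeffOn] using hasSum_sq_fourierCoeffOn (zero_lt_one' ℝ) hu

lemma fc_of_hasDerivAt {u u' : ℝ → ℂ} (hu : ∀ x ∈ uIcc 0 1, HasDerivAt u (u' x) x)
    (hu' : IntervalIntegrable u' volume 0 1) (hper : u 0 = u 1) (m : ℤ) :
    fc u' m = 2 * Real.pi * Complex.I * m * fc u m := by
  rcases eq_or_ne m 0 with rfl | hm
  · simp [fc, intervalIntegral.integral_eq_sub_of_hasDerivAt hu hu', hper]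
  · have hm' : (m : ℂ) ≠ 0 := Int.cast_ne_zero.2 hm
    rw [fc_eq_fourierCoeffOn u, fourierCoeffOn_of_hasDerivAt (zero_lt_one' ℝ) hm hu hu',
      ← fc_eq_fourierCoeffOn, hper]
    have hpi : (Real.pi : ℂ) ≠ 0 := Complex.ofReal_ne_zero.2 Real.pi_ne_zero
    field_simp
    simp

lemma sobNorm_nonneg (r : ℝ) (u : ℝ → ℂ) : 0 ≤ sobNorm r u := Real.sqrt_nonneg _

lemma sq_sobNorm (r : ℝ) (u : ℝ → ℂ) :
    sobNorm r u ^ 2 = ‖fc u 0‖ ^ 2 +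
      ∑' m : ℤ, if m = 0 then 0 else |(m : ℝ)| ^ (2 * r) * ‖fc u m‖ ^ 2 :=
  Real.sq_sqrt <| add_nonneg (by positivity) <| tsum_nonneg fun m => by split_ifs <;> positivity

lemma sq_sobNorm_zero {u : ℝ → ℂ} (hu : MemLp u 2 (volume.restrict (Ioc 0 1))) :
    sobNorm 0 u ^ 2 = ∫ t in (0 : ℝ)..1, ‖u t‖ ^ 2 := by
  have hsum := hasSum_sq_norm_fc hu
  rw [sq_sobNorm, ← hsum.tsum_eq, hsum.summable.tsum_eq_add_tsum_ite 0]
  simp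

lemma sobNorm_le_of_hasDerivAt (r : ℝ) {u u' : ℝ → ℂ}
    (hu : ∀ x ∈ uIcc 0 1, HasDerivAt u (u' x) x) (hu' : IntervalIntegrable u' volume 0 1)
    (hper : u 0 = u 1) : sobNorm r u' ≤ 2 * Real.pi * sobNorm (r + 1) u := by
  have hterm (m : ℤ) : (if m = 0 then 0 else |(m : ℝ)| ^ (2 * r) * ‖fc u' m‖ ^ 2) =
      (2 * Real.pi) ^ 2 *
        (if m = 0 then 0 else |(m : ℝ)| ^ (2 * (r + 1)) * ‖fc u m‖ ^ 2) := by
    split_ifs with hm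
    · rw [mul_zero]
    · have hpow : |(m : ℝ)| ^ (2 * (r + 1)) = |(m : ℝ)| ^ (2 * r) * |(m : ℝ)| ^ 2 := by
        rw [mul_add, mul_one, Real.rpow_add (by positivity), Real.rpow_two]
      have hnorm : ‖fc u' m‖ = 2 * Real.pi * |(m : ℝ)| * ‖fc u m‖ := by
        rw [fc_of_hasDerivAt hu hu' hper]
        simp [abs_of_pos Real.pi_pos]
      rw [hpow, hnorm]
      ring
  have hzero : fc u' 0 = 0 := by simp [fc_of_hasDerivAt hu hu' hper]
  have := Real.pi_pos
  refine le_of_sq_le_sq ?_ (mul_nonneg (by positivity) (sobNorm_nonneg _ _))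
  rw [mul_pow, sq_sobNorm, sq_sobNorm, tsum_congr hterm, tsum_mul_left, hzero, norm_zero,
    zero_pow two_ne_zero, zero_add]
  gcongr
  exact le_add_of_nonneg_left (by positivity)

lemma gridNorm_sample_le_sobNorm {u : ℝ → ℂ} (hu : ContDiff ℝ 1 u) (hper : u 0 = u 1) (N : ℕ)
    [NeZero N] :
    gridNorm (fun j => u (gridPoint N 0 j)) ≤
      2 * Real.pi * (sobNorm 0 u + 1 / (N : ℝ) * sobNorm 1 u) := by
  have hcd := hu.continuous_deriv le_rfl
  have hderiv : sobNorm 0 (deriv u) ≤ 2 * Real.pi * sobNorm 1 u := by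
    simpa only [zero_add] using sobNorm_le_of_hasDerivAt 0
      (fun x _ => (hu.differentiable one_ne_zero x).hasDerivAt) (hcd.intervalIntegrable _ _) hper
  have hu₀ := sobNorm_nonneg 0 u
  have hd₀ := sobNorm_nonneg 0 (deriv u)
  have hsample : gridNorm (fun j => u (gridPoint N 0 j)) ^ 2 ≤
      (2 * sobNorm 0 u + 1 / (N : ℝ) * sobNorm 0 (deriv u)) ^ 2 :=
    calc _ ≤ 2 * sobNorm 0 u ^ 2 + (1 / (N : ℝ)) ^ 2 * sobNorm 0 (deriv u) ^ 2 := by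
          rw [sq_sobNorm_zero (memLp_two_restrict_Ioc_of_continuous hu.continuous 0 1),
            sq_sobNorm_zero (memLp_two_restrict_Ioc_of_continuous hcd 0 1)]
          exact sq_gridNorm_sample_le hu N
      _ ≤ _ := by
          have : 0 ≤ 1 / (N : ℝ) * sobNorm 0 (deriv u) := by positivity
          nlinarith
  calc gridNorm (fun j => u (gridPoint N 0 j))
      ≤ 2 * sobNorm 0 u + 1 / (N : ℝ) * sobNorm 0 (deriv u) :=
        le_of_sq_le_sq hsample (by positivity)
    _ ≤ 2 * Real.pi * sobNorm 0 u + 1 / (N : ℝ) * (2 * Real.pi * sobNorm 1 u) := by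
        gcongr
        linarith [Real.pi_gt_three]
    _ = _ := by ring

theorem stmt_11_general {A K : ℝ → ℝ → ℂ} (hA : ∃ a, ∀ s t, ‖A s t‖ ≤ a)
    (hK : ∃ b, ∀ s t, ‖K s t‖ ≤ b) {ε : ℝ} (hε : Int.fract ε ≠ 0) :
    ∃ C > 0, ∀ (N : ℕ) [NeZero N] (ψ : ZMod N → ℂ) (u : ℝ → ℂ), ContDiff ℝ 1 u → u 0 = u 1 →
      ‖(1 / (N : ℂ)) ^ 2 * ∑ i, ∑ j,
          ψ i * logKer A K (gridPoint N ε i) (gridPoint N 0 j) * u (gridPoint N 0 j)‖ ≤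
        C * gridNorm ψ * (sobNorm 0 u + 1 / (N : ℝ) * sobNorm 1 u) := by
  obtain ⟨a, ha⟩ := hA
  obtain ⟨b, hb⟩ := hK
  set B := 2 * a ^ 2 * (128 * (1 / √(Int.fract ε) + 1 / √(1 - Int.fract ε))) + 2 * b ^ 2
  refine ⟨(√B + 1) * (2 * Real.pi), by positivity, fun N _ ψ u hu hper => ?_⟩
  have hψ := gridNorm_nonneg ψ
  have hsample := gridNorm_nonneg fun j => u (gridPoint N 0 j)
  calc _ ≤ √B * gridNorm ψ * gridNorm (fun j => u (gridPoint N 0 j)) :=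
        norm_sq_mul_sum_sum_le_gridNorm (sum_sum_sq_norm_logKer_le ha hb hε N) ψ _
    _ ≤ (√B + 1) * gridNorm ψ * (2 * Real.pi * (sobNorm 0 u + 1 / (N : ℝ) * sobNorm 1 u)) := by
        gcongr
        · exact le_add_of_nonneg_right zero_le_one
        · exact gridNorm_sample_le_sobNorm hu hper N
    _ = _ := by ring

/-- discrete bilinear bound
`|h² Σ_{i,j} ψ_i V₂(t_{i+ε}, t_j) u(t_j)| ≤ C_ε ‖ψ_h‖₀ (‖u‖₀ + h ‖u‖₁)`. -/
theorem stmt_11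
    (A2 K2 : ℝ → ℝ → ℂ) (hA2 : SPK A2) (hK2 : SPK K2)
    (ε : ℝ) (hε1 : ε ∈ Set.Icc (-(1:ℝ)/2) (1/2)) (hε0 : ε ≠ 0) :
    ∃ C > (0:ℝ), ∀ (N : ℕ) [NeZero N], 2 ≤ N → ∀ ψ : ZMod N → ℂ,
      ∀ u : ℝ → ℂ, ContDiff ℝ 1 u → Function.Periodic u 1 →
        ‖(1 / (N : ℂ)) ^ 2 * ∑ i : ZMod N, ∑ j : ZMod N,
            ψ i * logKer A2 K2 (tg (1 / (N : ℝ)) ε ((i.val : ℕ) : ℤ))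
                (tg (1 / (N : ℝ)) 0 ((j.val : ℕ) : ℤ))
              * u (tg (1 / (N : ℝ)) 0 ((j.val : ℕ) : ℤ))‖ ≤
          C * Real.sqrt ((1 / (N : ℝ)) * ∑ i : ZMod N, ‖ψ i‖ ^ 2)
            * (sobNorm 0 u + (1 / (N : ℝ)) * sobNorm 1 u) := by
  have hε : |ε| < 1 := abs_lt.2 ⟨by linarith [hε1.1], by linarith [hε1.2]⟩
  obtain ⟨C, hC, hbound⟩ := stmt_11_general hA2.exists_norm_le hK2.exists_norm_le
    (fract_ne_zero_of_abs_lt_one hε hε0)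
  exact ⟨C, hC, fun N _ _ ψ u hu hper => hbound N ψ u hu (by simpa using (hper 0).symm)⟩
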